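/- arXiv:1702.06215 — 6 statements merged into one kernel-verified Lean document; each statement's English description precedes it below -/
import Mathlib

section
/- Let N ≥ 1 be an integer, let μ_1, …, μ_N be strictly positive real numbers, and set ω_i = μ_i + μ_{i+1} for i = 1, …, N−1 and ω_N = μ_N. Let α ∈ ℝ² be a nonzero vector and set β = −μ_1 α. Consider the real linear ODE on ℝ² × (ℝ²)^N with state (x_p, x_{o1}, …, x_{oN}) given by: ẋ_p = 2 J α β^T x_{o1}; ẋ_{o1} = 2 ω_1 J x_{o1} − 2 μ_2 x_{o2} + 2 J β α^T x_p; ẋ_{oi} = 2 ω_i J x_{oi} + 2 μ_i x_{o(i−1)} − 2 μ_{i+1} x_{o(i+1)} for 2 ≤ i ≤ N−1; and ẋ_{oN} = 2 ω_N J x_{oN} + 2 μ_N x_{o(N−1)}. Define the plant output z_p(t) = α^T x_p(t) and the observer outputs z_{ok}(t) = (1/‖α‖²) α^T (−J)^{k−1} x_{ok}(t) for k = 1, …, N. Then for every initial condition, and for every k = 1, …, N, the time average (1/T) ∫_0^T ( z_p(t) − z_{ok}(t) ) dt converges to 0 as T → ∞ (time-averaged consensus convergence of the distributed direct coupled observer).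 -/
open Matrix Filter

/-!
Put `y k = (-J) ^ k xo k`, `s = α ⬝ᵥ α` and `z = α ⬝ᵥ xp`.  Since `α ⬝ᵥ J α = 0`, `z` is constant,
and rotating by `(-J) ^ k` turns the chain into `y' = 2 J (L y - b)`, where `L` is the symmetric
weighted path Laplacian grounded at the plant and `b` is the forcing by the plant, which acts as a
node held at `z • α`.  The choice of `ω` makes the configuration `y k = z • α` for all `k`
stationary, so the components of the deviation from it along `α` and along `-J α`, divided by `s`,
satisfy `p' = 2 L q`, `q' = -2 L p`, and the averaged function is `-p`.

* Because `L` is symmetric, `∑ (p² + q²)` is conserved, so every solution is bounded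
  (`sum_mul_pathLap_comm`, `exists_bound_of_chain`).
* Because `L` is injective, `q' = -2 L p` recovers the integrals of `p` from increments of the
  bounded function `q`; hence these integrals stay bounded (`exists_integral_bound_of_chain`) and
  the time averages of `p` tend to `0`.
-/

/-- The grounded path Laplacian with weights `m`, evaluated at node `k + 1`: the edge between nodes
`k` and `k + 1` has weight `m k`. Node `0` is the grounded one, and a chain with `N` free nodes is
obtained by taking `m N = 0`. -/
def pathLap (m : ℕ → ℝ) (a : ℕ → ℝ) (k : ℕ) : ℝ :=
  m k * (a (k + 1) - a k) + m (k + 1) * (a (k + 1) - a (k + 2))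

/-- Symmetry of the grounded path Laplacian: the difference of the two bilinear expressions
telescopes to a discrete Wronskian, which vanishes at both ends. -/
lemma sum_mul_pathLap_comm (N : ℕ) (m a b : ℕ → ℝ) (hmN : m N = 0) (ha : a 0 = 0) (hb : b 0 = 0) :
    ∑ k ∈ Finset.range N, (a (k + 1) * pathLap m b k - b (k + 1) * pathLap m a k) = 0 := by
  have h : ∀ k, a (k + 1) * pathLap m b k - b (k + 1) * pathLap m a k =
      m (k + 1) * (a (k + 1 + 1) * b (k + 1) - b (k + 1 + 1) * a (k + 1))
        - m k * (a (k + 1) * b k - b (k + 1) * a k) := by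
    intro k
    simp only [pathLap]
    ring
  rw [Finset.sum_congr rfl fun k _ => h k,
    Finset.sum_range_sub fun k => m k * (a (k + 1) * b k - b (k + 1) * a k)]
  simp [hmN, ha, hb]

/-- Conservation of `∑ (p² + q²)` bounds `q` along the whole trajectory. -/
lemma exists_bound_of_chain (N : ℕ) (m : ℕ → ℝ) (hmN : m N = 0) (p q : ℕ → ℝ → ℝ)
    (hp0 : ∀ t, p 0 t = 0) (hq0 : ∀ t, q 0 t = 0)
    (hp : ∀ k < N, ∀ t, HasDerivAt (p (k + 1)) (2 * pathLap m (fun j => q j t) k) t)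
    (hq : ∀ k < N, ∀ t, HasDerivAt (q (k + 1)) (-(2 * pathLap m (fun j => p j t) k)) t) :
    ∃ C, ∀ k < N, ∀ t, |q (k + 1) t| ≤ C := by
  let V : ℝ → ℝ := fun t => ∑ k ∈ Finset.range N, (p (k + 1) t ^ 2 + q (k + 1) t ^ 2)
  have hV : ∀ t, HasDerivAt V 0 t := by
    intro t
    have h : HasDerivAt V (∑ k ∈ Finset.range N,
        (4 * (p (k + 1) t * pathLap m (fun j => q j t) k
          - q (k + 1) t * pathLap m (fun j => p j t) k))) t := by
      refine HasDerivAt.fun_sum fun k hk => ?_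
      have hk' := Finset.mem_range.1 hk
      refine (((hp k hk' t).pow 2).add ((hq k hk' t).pow 2)).congr_deriv ?_
      ring
    rwa [← Finset.mul_sum, sum_mul_pathLap_comm N m (fun j => p j t) (fun j => q j t) hmN
      (hp0 t) (hq0 t), mul_zero] at h
  have hconst : ∀ t, V t = V 0 := fun t =>
    is_const_of_deriv_eq_zero (fun t => (hV t).differentiableAt) (fun t => (hV t).deriv) t 0
  refine ⟨√(V 0), fun k hk t => Real.abs_le_sqrt ?_⟩
  rw [← hconst t]
  have h := Finset.single_le_sum (f := fun k => p (k + 1) t ^ 2 + q (k + 1) t ^ 2)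
    (fun i _ => by positivity) (Finset.mem_range.2 hk)
  have h' : p (k + 1) t ^ 2 + q (k + 1) t ^ 2 ≤ V t := h
  nlinarith [sq_nonneg (p (k + 1) t)]

/-- The primitives of `p` stay bounded. The increment of `q (k + 1)` controls the difference of
consecutive fluxes `m k * (P (k + 1) - P k)`; the fluxes are bounded going down from the free end
`m N = 0`, then the primitives `P` going up from the grounded node `P 0 = 0`. -/
lemma exists_integral_bound_of_chain (N : ℕ) (m : ℕ → ℝ) (hm : ∀ k < N, 0 < m k) (hmN : m N = 0)
    (p q : ℕ → ℝ → ℝ) (hp0 : ∀ t, p 0 t = 0) (hq0 : ∀ t, q 0 t = 0) (hpc : ∀ k, Continuous (p k))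
    (hp : ∀ k < N, ∀ t, HasDerivAt (p (k + 1)) (2 * pathLap m (fun j => q j t) k) t)
    (hq : ∀ k < N, ∀ t, HasDerivAt (q (k + 1)) (-(2 * pathLap m (fun j => p j t) k)) t) :
    ∀ k ≤ N, ∃ C, ∀ T, |∫ t in (0:ℝ)..T, p k t| ≤ C := by
  obtain ⟨B, hB⟩ := exists_bound_of_chain N m hmN p q hp0 hq0 hp hq
  let P : ℕ → ℝ → ℝ := fun k T => ∫ t in (0:ℝ)..T, p k t
  have hP0 : ∀ k, P k 0 = 0 := fun k => intervalIntegral.integral_same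
  have hP : ∀ k t, HasDerivAt (P k) (p k t) t := fun k t =>
    (hpc k).integral_hasStrictDerivAt 0 t |>.hasDerivAt
  have hrel : ∀ k < N, ∀ T, q (k + 1) T + 2 * pathLap m (fun j => P j T) k = q (k + 1) 0 := by
    intro k hk T
    have hd : ∀ t, HasDerivAt (fun t => q (k + 1) t + 2 * pathLap m (fun j => P j t) k) 0 t := by
      intro t
      refine ((hq k hk t).add (((((hP (k + 1) t).sub (hP k t)).const_mul (m k)).add
        (((hP (k + 1) t).sub (hP (k + 2) t)).const_mul (m (k + 1)))).const_mul 2)).congr_deriv ?_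
      simp only [pathLap]
      ring
    have h := is_const_of_deriv_eq_zero (fun t => (hd t).differentiableAt)
      (fun t => (hd t).deriv) T 0
    simpa [pathLap, hP0] using h
  have hflux : ∀ k ≤ N, ∃ C, ∀ T, |m k * (P (k + 1) T - P k T)| ≤ C := by
    intro k hk
    induction hk using Nat.decreasingInduction with
    | self => exact ⟨0, fun T => by simp [hmN]⟩
    | of_succ k hk ih =>
      obtain ⟨C, hC⟩ := ih
      refine ⟨C + B, fun T => ?_⟩
      have h1 := hrel k hk T
      have h2 := abs_le.1 (hC T)
      have h3 := abs_le.1 (hB k hk T)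
      have h4 := abs_le.1 (hB k hk 0)
      simp only [pathLap] at h1
      have h5 : m (k + 1) * (P (k + 1) T - P (k + 2) T)
          = -(m (k + 1) * (P (k + 1 + 1) T - P (k + 1) T)) := by ring
      rw [h5] at h1
      exact abs_le.2 ⟨by linarith, by linarith⟩
  intro k hk
  induction k with
  | zero => exact ⟨0, fun T => by simp [hp0]⟩
  | succ k ih =>
    obtain ⟨C, hC⟩ := ih (by omega)
    obtain ⟨D, hD⟩ := hflux k (by omega)
    have hmk := hm k hk
    refine ⟨C + D / m k, fun T => ?_⟩
    have h1 : |P (k + 1) T - P k T| ≤ D / m k := by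
      rw [le_div_iff₀ hmk]
      have := hD T
      rwa [abs_mul, abs_of_pos hmk, mul_comm] at this
    have h2 : |P k T| ≤ C := hC T
    calc |P (k + 1) T| = |P k T + (P (k + 1) T - P k T)| := by ring_nf
      _ ≤ |P k T| + |P (k + 1) T - P k T| := abs_add_le _ _
      _ ≤ C + D / m k := add_le_add h2 h1

/-- The matrix `-J` is the rotation `(a, b) ↦ (-b, a)`. -/
lemma neg_J_pow_succ_mulVec (k : ℕ) (v : Fin 2 → ℝ) :
    ((-!![0, 1; -1, 0] : Matrix (Fin 2) (Fin 2) ℝ) ^ (k + 1) *ᵥ v) =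
      ![-((-!![0, 1; -1, 0] : Matrix (Fin 2) (Fin 2) ℝ) ^ k *ᵥ v) 1,
        ((-!![0, 1; -1, 0] : Matrix (Fin 2) (Fin 2) ℝ) ^ k *ᵥ v) 0] := by
  rw [pow_succ', ← mulVec_mulVec]
  generalize (-!![0, 1; -1, 0] : Matrix (Fin 2) (Fin 2) ℝ) ^ k *ᵥ v = w
  ext i
  fin_cases i <;> simp [mulVec, dotProduct, Fin.sum_univ_two]

/-- The matrix `J` commutes with the powers of `-J` and acts as `(a, b) ↦ (b, -a)`. -/
lemma neg_J_pow_mulVec_J (k : ℕ) (v : Fin 2 → ℝ) :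
    ((-!![0, 1; -1, 0] : Matrix (Fin 2) (Fin 2) ℝ) ^ k *ᵥ (!![0, 1; -1, 0] *ᵥ v)) =
      ![((-!![0, 1; -1, 0] : Matrix (Fin 2) (Fin 2) ℝ) ^ k *ᵥ v) 1,
        -((-!![0, 1; -1, 0] : Matrix (Fin 2) (Fin 2) ℝ) ^ k *ᵥ v) 0] := by
  have h : (!![0, 1; -1, 0] : Matrix (Fin 2) (Fin 2) ℝ) *ᵥ v = -((-!![0, 1; -1, 0]) *ᵥ v) := by
    rw [neg_mulVec, neg_neg]
  rw [h, mulVec_neg, mulVec_mulVec, ← pow_succ, neg_J_pow_succ_mulVec]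
  ext i
  fin_cases i <;> simp

lemma HasDerivAt.mulVec_apply (M : Matrix (Fin 2) (Fin 2) ℝ) {x : ℝ → Fin 2 → ℝ} {x' : Fin 2 → ℝ}
    {t : ℝ} (h : HasDerivAt x x' t) (i : Fin 2) :
    HasDerivAt (fun t => (M *ᵥ x t) i) ((M *ᵥ x') i) t := by
  rw [hasDerivAt_pi] at h
  simp only [mulVec, dotProduct]
  exact HasDerivAt.fun_sum fun j _ => (h j).const_mul _

lemma mul_vecMulVec_mulVec_apply (M : Matrix (Fin 2) (Fin 2) ℝ) (a b x : Fin 2 → ℝ) (i : Fin 2) :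
    ((M * vecMulVec a b) *ᵥ x) i = (b ⬝ᵥ x) * (M *ᵥ a) i := by
  rw [mul_vecMulVec, vecMulVec_mulVec]
  simp [mul_comm]

/-- **Theorem 1 of the paper (deterministic matrix-entry form).**
With `μ_1,…,μ_N > 0`, `ω_i = μ_i + μ_{i+1}` for `i < N`, `ω_N = μ_N`, `α ≠ 0`,
`β = −μ_1 α`, consider any solution of the coupled linear ODE
`ẋ_p = 2 J α βᵀ x_{o1}`,
`ẋ_{o1} = 2 ω_1 J x_{o1} − 2 μ_2 x_{o2} + 2 J β αᵀ x_p`,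
`ẋ_{oi} = 2 ω_i J x_{oi} + 2 μ_i x_{o(i−1)} − 2 μ_{i+1} x_{o(i+1)}` (`2 ≤ i ≤ N−1`),
`ẋ_{oN} = 2 ω_N J x_{oN} + 2 μ_N x_{o(N−1)}`.
Then for every `k`, the time average of `z_p(t) − z_{ok}(t)` converges to `0` as `T → ∞`,
where `z_p = αᵀ x_p` and `z_{ok} = (1/‖α‖²) αᵀ (−J)^{k−1} x_{ok}`.
(Indices here are 0-based: `μ ⟨i⟩` is `μ_{i+1}` of the paper, and `‖α‖² = α ⬝ᵥ α`.) -/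
theorem stmt0 (N : ℕ) (hN : 1 ≤ N) (μ : Fin N → ℝ) (hμ : ∀ i, 0 < μ i)
    (ω : Fin N → ℝ)
    (hω : ∀ i : Fin N, ω i = μ i + (if h : (i : ℕ) + 1 < N then μ ⟨(i : ℕ) + 1, h⟩ else 0))
    (α : Fin 2 → ℝ) (hα : α ≠ 0) (β : Fin 2 → ℝ) (hβ : β = -(μ ⟨0, hN⟩ • α))
    (J : Matrix (Fin 2) (Fin 2) ℝ) (hJ : J = !![0, 1; -1, 0])
    (xp : ℝ → Fin 2 → ℝ) (xo : Fin N → ℝ → Fin 2 → ℝ)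
    (hxp : ∀ t : ℝ, HasDerivAt xp ((2 : ℝ) • ((J * vecMulVec α β) *ᵥ xo ⟨0, hN⟩ t)) t)
    (hxo : ∀ (i : Fin N) (t : ℝ), HasDerivAt (xo i)
      ((2 * ω i) • (J *ᵥ xo i t)
        + (if h : (i : ℕ) + 1 < N then
            (-(2 * μ ⟨(i : ℕ) + 1, h⟩)) • xo ⟨(i : ℕ) + 1, h⟩ t
          else 0)
        + (if h : 0 < (i : ℕ) then
            (2 * μ i) • xo ⟨(i : ℕ) - 1, by omega⟩ t
          else (2 : ℝ) • ((J * vecMulVec β α) *ᵥ xp t))) t) :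
    ∀ k : Fin N, Tendsto
      (fun T : ℝ => (1 / T) *
        ∫ t in (0:ℝ)..T,
          (α ⬝ᵥ xp t - (1 / (α ⬝ᵥ α)) * (α ⬝ᵥ ((-J) ^ (k : ℕ) *ᵥ xo k t))))
      atTop (nhds 0) := by
  subst hJ hβ
  set R : Matrix (Fin 2) (Fin 2) ℝ := -!![0, 1; -1, 0] with hR
  have hs2 : α ⬝ᵥ α = α 0 * α 0 + α 1 * α 1 := by simp [dotProduct, Fin.sum_univ_two]
  have hs : α ⬝ᵥ α ≠ 0 := fun h => hα (dotProduct_self_eq_zero.1 h)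
  have hz : ∀ t, HasDerivAt (fun t => α ⬝ᵥ xp t) 0 t := by
    intro t
    have h := hasDerivAt_pi.1 (hxp t)
    simp only [dotProduct, Fin.sum_univ_two]
    refine (((h 0).const_mul (α 0)).add ((h 1).const_mul (α 1))).congr_deriv ?_
    simp only [Pi.smul_apply, mul_vecMulVec_mulVec_apply]
    simp [mulVec, dotProduct, Fin.sum_univ_two]
    ring
  -- Extending the weights by `0` makes the equation of the last element an instance of the others.
  let m : ℕ → ℝ := fun k => if h : k < N then μ ⟨k, h⟩ else 0
  -- Rotated states, shifted by one so that node `0` is the plant.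
  let Z : ℕ → ℝ → Fin 2 → ℝ := fun k t => match k with
    | 0 => (α ⬝ᵥ xp t) • α
    | k + 1 => if h : k < N then R ^ k *ᵥ xo ⟨k, h⟩ t else 0
  have hZ0 : ∀ t i, Z 0 t i = (α ⬝ᵥ xp t) * α i := fun t i => rfl
  have hZs : ∀ k (h : k < N) t, Z (k + 1) t = R ^ k *ᵥ xo ⟨k, h⟩ t := fun k h t => dif_pos h
  have hZN : ∀ k, ¬ k < N → ∀ t, Z (k + 1) t = 0 := fun k h t => dif_neg h
  have key : ∀ k (hk : k < N) t, HasDerivAt (fun t => Z (k + 1) t 0)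
        (2 * pathLap m (fun j => Z j t 1) k) t ∧
      HasDerivAt (fun t => Z (k + 1) t 1) (-(2 * pathLap m (fun j => Z j t 0) k)) t := by
    intro k hk t
    have h := fun i => HasDerivAt.mulVec_apply (R ^ k) (hxo ⟨k, hk⟩ t) i
    have hmk : m k = μ ⟨k, hk⟩ := dif_pos hk
    have hωk : ω ⟨k, hk⟩ = m k + m (k + 1) := by rw [hω, hmk]
    simp only [hZs k hk]
    -- Interaction with the next element; it is absent exactly when `m (k + 1) = 0`.
    have hnext : R ^ k *ᵥ (if h : k + 1 < N then
            (-(2 * μ ⟨k + 1, h⟩)) • xo ⟨k + 1, h⟩ t else 0) =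
        ![-(2 * m (k + 1) * Z (k + 2) t 1), 2 * m (k + 1) * Z (k + 2) t 0] := by
      by_cases h1 : k + 1 < N
      · have : m (k + 1) = μ ⟨k + 1, h1⟩ := dif_pos h1
        rw [dif_pos h1, hZs (k + 1) h1, this, mulVec_smul, hR, neg_J_pow_succ_mulVec]
        ext i
        fin_cases i <;> simp <;> ring
      · have : m (k + 1) = 0 := dif_neg h1
        rw [dif_neg h1, this]
        ext i
        fin_cases i <;> simp
    -- Interaction with the previous element, or with the plant when `k = 0`.
    have hprev : R ^ k *ᵥ (if h : 0 < k then (2 * μ ⟨k, hk⟩) • xo ⟨k - 1, by omega⟩ t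
          else (2 : ℝ) • ((!![0, 1; -1, 0] * vecMulVec (-(μ ⟨0, hN⟩ • α)) α) *ᵥ xp t)) =
        ![-(2 * m k * Z k t 1), 2 * m k * Z k t 0] := by
      rw [hmk]
      rcases k with _ | k
      · ext i
        simp only [lt_irrefl, dite_false, pow_zero, one_mulVec, Pi.smul_apply,
          mul_vecMulVec_mulVec_apply]
        fin_cases i <;> simp [hZ0, mulVec, dotProduct, Fin.sum_univ_two] <;> ring
      · rw [dif_pos (Nat.succ_pos k), hZs k (by omega), mulVec_smul, hR, neg_J_pow_succ_mulVec]
        ext i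
        fin_cases i <;> simp <;> ring
    have hself := neg_J_pow_mulVec_J k (xo ⟨k, hk⟩ t)
    rw [← hR] at hself
    refine ⟨(h 0).congr_deriv ?_, (h 1).congr_deriv ?_⟩
    all_goals
      rw [mulVec_add, mulVec_add, hnext, hprev, mulVec_smul, hself, hωk]
      simp [pathLap, hZs k hk]
      ring
  -- Components, along `α` and `-J α`, of the deviation from the equilibrium where all `Z k` agree.
  let p : ℕ → ℝ → ℝ := fun k t =>
    (α 0 * Z k t 0 + α 1 * Z k t 1) / (α ⬝ᵥ α) - α ⬝ᵥ xp t
  let q : ℕ → ℝ → ℝ := fun k t => (α 0 * Z k t 1 - α 1 * Z k t 0) / (α ⬝ᵥ α)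
  have hp0 : ∀ t, p 0 t = 0 := by
    intro t
    simp only [p, hZ0]
    rw [sub_eq_zero, div_eq_iff hs, hs2]
    ring
  have hq0 : ∀ t, q 0 t = 0 := by
    intro t
    simp only [q, hZ0]
    ring
  have hp : ∀ k < N, ∀ t, HasDerivAt (p (k + 1)) (2 * pathLap m (fun j => q j t) k) t := by
    intro k hk t
    refine ((((((key k hk t).1.const_mul (α 0)).add ((key k hk t).2.const_mul (α 1))).div_const
      (α ⬝ᵥ α)).sub (hz t))).congr_deriv ?_
    simp only [pathLap, q]
    ring
  have hq : ∀ k < N, ∀ t, HasDerivAt (q (k + 1)) (-(2 * pathLap m (fun j => p j t) k)) t := by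
    intro k hk t
    refine (((((key k hk t).2.const_mul (α 0)).sub ((key k hk t).1.const_mul (α 1))).div_const
      (α ⬝ᵥ α))).congr_deriv ?_
    simp only [pathLap, p]
    ring
  have hpc : ∀ k, Continuous (p k) := by
    intro k
    rcases k with _ | k
    · exact (funext hp0 : p 0 = fun _ => 0) ▸ continuous_const
    · by_cases hk : k < N
      · exact continuous_iff_continuousAt.2 fun t => (hp k hk t).continuousAt
      · have h : Continuous fun t => α ⬝ᵥ xp t :=
          continuous_iff_continuousAt.2 fun t => (hz t).continuousAt
        have h' : p (k + 1) = fun t => -(α ⬝ᵥ xp t) := by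
          funext t
          simp only [p, hZN k hk, Pi.zero_apply]
          ring
        exact h' ▸ h.neg
  intro k
  obtain ⟨C, hC⟩ := exists_integral_bound_of_chain N m
    (fun k hk => by simpa [m, hk] using hμ ⟨k, hk⟩) (dif_neg (lt_irrefl N))
    p q hp0 hq0 hpc hp hq (k + 1) k.2
  have hint : ∀ t, α ⬝ᵥ xp t - (1 / (α ⬝ᵥ α)) * (α ⬝ᵥ (R ^ (k : ℕ) *ᵥ xo k t)) =
      -p (k + 1) t := by
    intro t
    have h : α ⬝ᵥ (R ^ (k : ℕ) *ᵥ xo k t) = α 0 * Z (k + 1) t 0 + α 1 * Z (k + 1) t 1 := by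
      rw [hZs k k.2]
      simp only [dotProduct, Fin.sum_univ_two]
    simp only [h, p]
    ring
  simp only [hint, intervalIntegral.integral_neg]
  refine Tendsto.zero_mul_isBoundedUnder_le
    (tendsto_const_nhds.div_atTop tendsto_id) ?_
  exact isBoundedUnder_of ⟨C, fun T => by simpa using hC T⟩
end

section
/- Let N ≥ 1 be an integer, let μ_1, …, μ_N be strictly positive real numbers, and set ω_i = μ_i + μ_{i+1} for i = 1, …, N−1 and ω_N = μ_N. Let R_o be the real symmetric 2N×2N block tridiagonal matrix with 2×2 blocks whose i-th diagonal block is ω_i I, whose (i, i+1) block is μ_{i+1} J, and whose (i+1, i) block is −μ_{i+1} J, for i = 1, …, N−1. Then R_o is positive definite. -/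
/-!
With `x_k ∈ ℝ²` the blocks of `x`, completing squares gives
`xᵀ Rₒ x = μ_0 |J x_0|² + ∑_{k ≥ 1} μ_k |J x_k + x_{k-1}|²`,
that is `Rₒ = Bᵀ D B` with `D` the diagonal matrix of the `μ_k` and `B` block lower bidiagonal,
with diagonal blocks `J` and subdiagonal blocks `I`. Since `J` is invertible, so is `B` (forward
substitution), and a congruence by an injective matrix preserves positive definiteness.
-/

open Matrix

/-- The block lower bidiagonal factor, with blocks `J` on the diagonal and `I` below it. -/
def bidiag (N : ℕ) : Matrix (Fin N × Fin 2) (Fin N × Fin 2) ℝ := fun p q =>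
  if p.1 = q.1 then (!![0, 1; -1, 0] : Matrix (Fin 2) (Fin 2) ℝ) p.2 q.2
  else if (p.1 : ℕ) = (q.1 : ℕ) + 1 then (1 : Matrix (Fin 2) (Fin 2) ℝ) p.2 q.2
  else 0

lemma bidiag_apply {N : ℕ} (k i : Fin N) (c a : Fin 2) :
    bidiag N (k, c) (i, a) =
      if k = i then (!![0, 1; -1, 0] : Matrix (Fin 2) (Fin 2) ℝ) c a
      else if (k : ℕ) = (i : ℕ) + 1 then (1 : Matrix (Fin 2) (Fin 2) ℝ) c a
      else 0 := rfl

/-- Pairing a column of a lower bidiagonal matrix with a vector leaves at most two terms. -/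
lemma sum_bidiag_col {N : ℕ} (i : Fin N) (p q : ℝ) (g : Fin N → ℝ) :
    ∑ k : Fin N, (if k = i then p else if (k : ℕ) = (i : ℕ) + 1 then q else 0) * g k =
      p * g i + if h : (i : ℕ) + 1 < N then q * g ⟨(i : ℕ) + 1, h⟩ else 0 := by
  rw [← Finset.add_sum_erase _ _ (Finset.mem_univ i)]
  congr 1
  · simp
  · split_ifs with h
    · rw [Finset.sum_eq_single ⟨(i : ℕ) + 1, h⟩]
      · simp [Fin.ext_iff]
      · intro k hk hne
        have h1 : k ≠ i := Finset.ne_of_mem_erase hk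
        have h2 : (k : ℕ) ≠ (i : ℕ) + 1 := fun e => hne (Fin.ext e)
        simp [h1, h2]
      · intro hn
        simp [Fin.ext_iff] at hn
    · refine Finset.sum_eq_zero fun k hk => ?_
      have h1 : k ≠ i := Finset.ne_of_mem_erase hk
      have h2 : (k : ℕ) ≠ (i : ℕ) + 1 := by have := k.isLt; omega
      simp [h1, h2]

/-- Forward substitution: the diagonal blocks of `bidiag N` are invertible. -/
lemma bidiag_mulVec_injective (N : ℕ) : Function.Injective (bidiag N).mulVec := by
  rw [← Matrix.coe_mulVecLin, ← LinearMap.ker_eq_bot, LinearMap.ker_eq_bot']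
  intro x hx
  have key : ∀ n : ℕ, ∀ k : Fin N, (k : ℕ) = n → ∀ a, x (k, a) = 0 := by
    intro n
    induction n using Nat.strong_induction_on with
    | _ n ih =>
      intro k hk
      have row : ∀ c, ∑ a, (!![0, 1; -1, 0] : Matrix (Fin 2) (Fin 2) ℝ) c a * x (k, a) = 0 := by
        intro c
        have h := congrFun hx (k, c)
        simp only [Matrix.mulVecLin_apply, Matrix.mulVec, dotProduct, Fintype.sum_prod_type,
          Pi.zero_apply] at h
        rw [Finset.sum_eq_single k] at h
        · simpa [bidiag] using h
        · intro i _ hi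
          refine Finset.sum_eq_zero fun a _ => ?_
          by_cases h2 : (k : ℕ) = (i : ℕ) + 1
          · rw [ih i (by omega) i rfl a, mul_zero]
          · simp [bidiag, hi.symm, h2]
        · simp
      have r0 := row 0
      have r1 := row 1
      simp [Fin.sum_univ_two] at r0 r1
      intro a
      fin_cases a
      · exact r1
      · exact r0
  ext ⟨k, a⟩
  exact key k k rfl a

/-- **Lemma 1 of the paper.** With `μ_1,…,μ_N > 0`, `ω_i = μ_i + μ_{i+1}` for `i < N`,
`ω_N = μ_N`, the real symmetric `2N×2N` block tridiagonal matrix `R_o` with diagonal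
blocks `ω_i I`, super-diagonal blocks `μ_{i+1} J` and sub-diagonal blocks `−μ_{i+1} J`
is positive definite.  (Indices here are 0-based: `μ ⟨i⟩` is `μ_{i+1}` of the paper.) -/
theorem stmt1 (N : ℕ) (hN : 1 ≤ N) (μ : Fin N → ℝ) (hμ : ∀ i, 0 < μ i)
    (ω : Fin N → ℝ)
    (hω : ∀ i : Fin N, ω i = μ i + (if h : (i : ℕ) + 1 < N then μ ⟨(i : ℕ) + 1, h⟩ else 0))
    (J : Matrix (Fin 2) (Fin 2) ℝ) (hJ : J = !![0, 1; -1, 0])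
    (Ro : Matrix (Fin N × Fin 2) (Fin N × Fin 2) ℝ)
    (hRo : ∀ (i j : Fin N) (a b : Fin 2), Ro (i, a) (j, b) =
      if i = j then ω i * (1 : Matrix (Fin 2) (Fin 2) ℝ) a b
      else if (j : ℕ) = (i : ℕ) + 1 then μ j * J a b
      else if (i : ℕ) = (j : ℕ) + 1 then -(μ i) * J a b
      else 0) :
    Ro.PosDef := by
  have hfac : Ro = (bidiag N)ᴴ * diagonal (fun p => μ p.1) * bidiag N := by
    ext ⟨i, a⟩ ⟨j, b⟩
    rw [hRo, Matrix.mul_apply, Fintype.sum_prod_type, Finset.sum_comm]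
    simp only [Matrix.mul_diagonal, Matrix.conjTranspose_apply, star_trivial, mul_assoc]
    simp only [bidiag_apply, sum_bidiag_col, Fin.sum_univ_two, hω, hJ,
      Matrix.one_fin_two]
    simp only [Fin.ext_iff]
    have hi := i.isLt
    have hj := j.isLt
    by_cases hij : i = j
    · subst hij
      by_cases h : (i : ℕ) + 1 < N <;> fin_cases a <;> fin_cases b <;>
        simp [h, add_comm]
    · have hv : (i : ℕ) ≠ j := fun e => hij (Fin.ext e)
      by_cases h1 : (j : ℕ) = (i : ℕ) + 1
      · have h : (i : ℕ) + 1 < N := h1 ▸ hj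
        have e : j = ⟨(i : ℕ) + 1, h⟩ := Fin.ext h1
        subst e
        have h3 : (i : ℕ) ≠ (i : ℕ) + 1 + 1 := by omega
        fin_cases a <;> fin_cases b <;> simp [h, h3]
      · by_cases h2 : (i : ℕ) = (j : ℕ) + 1
        · have h3 : (i : ℕ) + 1 ≠ j := by omega
          have h4 : (i : ℕ) + 1 ≠ (j : ℕ) + 1 := by omega
          fin_cases a <;> fin_cases b <;> simp only [hv, h1, h3, h4, if_false, if_pos h2] <;> simp
        · have h3 : (i : ℕ) + 1 ≠ j := by omega
          have h4 : (i : ℕ) + 1 ≠ (j : ℕ) + 1 := by omega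
          simp only [hv, h1, h2, h3, h4, if_false, mul_zero, dite_eq_ite, ite_self, add_zero]
  rw [hfac]
  have hD : (diagonal fun p : Fin N × Fin 2 => μ p.1).PosDef :=
    Matrix.PosDef.diagonal fun p => hμ p.1
  exact hD.conjTranspose_mul_mul_same (bidiag_mulVec_injective N)
end

section
/- Let N ≥ 1 be an integer, let μ_1, …, μ_N be strictly positive real numbers, and set ω_i = μ_i + μ_{i+1} for i = 1, …, N−1 and ω_N = μ_N. Let R̃_o be the complex Hermitian N×N tridiagonal matrix with diagonal entries ω_1, …, ω_N, superdiagonal entries (R̃_o)_{i,i+1} = −i μ_{i+1}, and subdiagonal entries (R̃_o)_{i+1,i} = i μ_{i+1}, for i = 1, …, N−1 (i denoting the imaginary unit). Then R̃_o is positive definite. -/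
/-! With `bₖ = aₖ + i aₖ₋₁` (and `a₋₁ = 0`), the quadratic form of the matrix is the weighted sum of
squares `a† R̃ a = ∑ₖ μₖ |bₖ|²`. In matrix form `R̃ = Bᴴ diag(μ) B` with `B` (`factorB` below)
lower bidiagonal with unit diagonal, hence of determinant one. A congruence by an invertible matrix
preserves the positive definiteness of `diag(μ)`. -/

open Matrix
open scoped ComplexOrder

/-- The lower bidiagonal `N × N` matrix with `1` on the diagonal and `i` on the subdiagonal. -/
def factorB (N : ℕ) : Matrix (Fin N) (Fin N) ℂ :=
  Matrix.of fun k j =>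
    (if k = j then 1 else 0) + (if (k : ℕ) = (j : ℕ) + 1 then Complex.I else 0)

theorem factorB_det (N : ℕ) : (factorB N).det = 1 := by
  rw [Matrix.det_of_isLowerTriangular]
  · simp [factorB]
  · intro i j hij
    have h : i < j := by simpa using hij
    have h1 : i ≠ j := h.ne
    have h2 : (i : ℕ) ≠ (j : ℕ) + 1 := by
      have : (i : ℕ) < j := h
      omega
    simp [factorB, h1, h2]

theorem sum_ite_val_eq_succ {N : ℕ} (i : Fin N) (f : Fin N → ℂ) :
    (∑ k : Fin N, if (k : ℕ) = (i : ℕ) + 1 then f k else 0) =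
      if h : (i : ℕ) + 1 < N then f ⟨(i : ℕ) + 1, h⟩ else 0 := by
  split_ifs with h
  · rw [Finset.sum_eq_single (⟨(i : ℕ) + 1, h⟩ : Fin N)]
    · simp
    · intro k _ hk
      rw [if_neg]
      intro h'
      exact hk (Fin.ext h')
    · simp
  · refine Finset.sum_eq_zero fun k _ => if_neg ?_
    have := k.isLt
    omega

/-- Column `i` of `B` is supported at `i` and `i + 1`, so an entry of `Bᴴ diag(μ) B` has at most
two terms. -/
theorem factorB_congr_apply {N : ℕ} (d : Fin N → ℂ) (i j : Fin N) :
    ((factorB N)ᴴ * diagonal d * factorB N) i j =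
      d i * factorB N i j +
        if h : (i : ℕ) + 1 < N then
          -Complex.I * (d ⟨(i : ℕ) + 1, h⟩ * factorB N ⟨(i : ℕ) + 1, h⟩ j) else 0 := by
  rw [← sum_ite_val_eq_succ i fun k => -Complex.I * (d k * factorB N k j), Matrix.mul_apply]
  have hi : d i * factorB N i j = ∑ k : Fin N, if k = i then d k * factorB N k j else 0 := by
    simp
  rw [hi, ← Finset.sum_add_distrib]
  refine Finset.sum_congr rfl fun k _ => ?_
  rw [Matrix.mul_diagonal, Matrix.conjTranspose_apply]
  have hs : star (factorB N k i) =
      (if k = i then 1 else 0) + (if (k : ℕ) = (i : ℕ) + 1 then -Complex.I else 0) := by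
    simp only [factorB, Matrix.of_apply, star_add]
    split_ifs <;> simp
  rw [hs]
  split_ifs <;> ring

/-- **Key step in the proof of Lemma 1 of the paper.** With `μ_1,…,μ_N > 0`,
`ω_i = μ_i + μ_{i+1}` for `i < N`, `ω_N = μ_N`, the complex Hermitian `N×N` tridiagonal
matrix `R̃_o` with diagonal `ω_1,…,ω_N`, superdiagonal entries `−i μ_{i+1}` and
subdiagonal entries `i μ_{i+1}` is positive definite.
(Indices here are 0-based: `μ ⟨i⟩` is `μ_{i+1}` of the paper.) -/
theorem stmt2 (N : ℕ) (hN : 1 ≤ N) (μ : Fin N → ℝ) (hμ : ∀ i, 0 < μ i)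
    (ω : Fin N → ℝ)
    (hω : ∀ i : Fin N, ω i = μ i + (if h : (i : ℕ) + 1 < N then μ ⟨(i : ℕ) + 1, h⟩ else 0))
    (Rt : Matrix (Fin N) (Fin N) ℂ)
    (hRt : ∀ i j : Fin N, Rt i j =
      if i = j then (ω i : ℂ)
      else if (j : ℕ) = (i : ℕ) + 1 then -Complex.I * (μ j : ℂ)
      else if (i : ℕ) = (j : ℕ) + 1 then Complex.I * (μ i : ℂ)
      else 0) :
    Rt.PosDef := by
  have hfac : Rt = (factorB N)ᴴ * diagonal (fun i => (μ i : ℂ)) * factorB N := by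
    ext i j
    rw [factorB_congr_apply, hRt, hω]
    simp only [factorB, Matrix.of_apply, Fin.ext_iff]
    rcases lt_trichotomy (i : ℕ) j with h | h | h
    · have hN' : (i : ℕ) + 1 < N := by have := j.isLt; omega
      by_cases hj : (j : ℕ) = i + 1
      · have : (⟨(i : ℕ) + 1, hN'⟩ : Fin N) = j := Fin.ext hj.symm
        simp [hj, hN', this]
        intro h'
        omega
      · have h3 : (i : ℕ) + 1 ≠ j := fun h => hj h.symm
        simp [hj, h3, h.ne, show (i : ℕ) ≠ j + 1 by omega]
    · obtain rfl : i = j := Fin.ext h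
      by_cases hN' : (i : ℕ) + 1 < N
      · simp only [hN', dif_pos]
        simp
        linear_combination (μ ⟨(i : ℕ) + 1, hN'⟩ : ℂ) * Complex.I_mul_I
      · simp [hN']
    · have h1 : (i : ℕ) ≠ j := h.ne'
      have h2 : (j : ℕ) ≠ i + 1 := by omega
      have h3 : (i : ℕ) + 1 ≠ j := by omega
      simp [h1, h2, h3]
      split_ifs <;> ring
  rw [hfac]
  refine PosDef.conjTranspose_mul_mul_same (PosDef.diagonal fun i => ?_) ?_
  · exact_mod_cast hμ i
  · refine Matrix.mulVec_injective_of_isUnit ?_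
    rw [Matrix.isUnit_iff_isUnit_det, factorB_det]
    exact isUnit_one
end

section
/- Let N ≥ 2 be an integer and let μ_2, …, μ_N be real numbers. Let R̃_{o2} be the complex Hermitian N×N tridiagonal matrix with diagonal entries μ_2, μ_2 + μ_3, μ_3 + μ_4, …, μ_{N−1} + μ_N, μ_N, superdiagonal entries (R̃_{o2})_{k−1,k} = −i μ_k and subdiagonal entries (R̃_{o2})_{k,k−1} = i μ_k for k = 2, …, N. Then for every a = (a_1, …, a_N) ∈ ℂ^N, a† R̃_{o2} a = Σ_{k=2}^{N} μ_k |i a_{k−1} + a_k|². In particular, if μ_2, …, μ_N ≥ 0 then R̃_{o2} is positive semidefinite. -/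
/-!
The quadratic form of a Hermitian tridiagonal matrix is a sum over the edges of a path: the edge
joining vertices `i` and `i + 1` carries the weight `μ (i + 2)` and contributes
`μ (i + 2) * (|x|² + |y|² - I * conj x * y + I * conj y * x)` with `x = a i`, `y = a (i + 1)`,
which is `μ (i + 2) * |I * x + y|²`. Each interior diagonal entry is shared between the two edges
meeting at its vertex; shifting the summation index of the lower diagonal part and of the
subdiagonal part by one aligns all four contributions. Positive semidefiniteness follows from
nonnegativity of every summand, together with Hermitian symmetry of the matrix.
-/

open Matrix
open scoped ComplexOrder

/-- One edge of the path: `|I x + y|²` expanded into the four terms coming from the matrix. -/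
lemma edge_expand (m : ℝ) (x y : ℂ) :
    ((m * ‖Complex.I * x + y‖ ^ 2 : ℝ) : ℂ) =
      star y * m * y + star x * m * x + star x * (-Complex.I * m) * y
        + star y * (Complex.I * m) * x := by
  rw [Complex.ofReal_mul, Complex.ofReal_pow, ← Complex.conj_mul']
  simp only [map_add, map_mul, Complex.conj_I, Complex.star_def]
  linear_combination (-(m : ℂ) * (starRingEnd ℂ) x * x) * Complex.I_sq

/-- Diagonal and off-diagonal parts of the quadratic form, regrouped edge by edge.
Here `A` is a sequence whose first `n + 1` terms are the coordinates of the vector. -/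
lemma tridiag_sum (n : ℕ) (μ : ℕ → ℝ) (A : ℕ → ℂ) :
    ∑ i ∈ Finset.range (n + 1), ∑ j ∈ Finset.range (n + 1), star (A i) *
      (if i = j then
        (((if 1 ≤ i then μ (i + 1) else 0) + (if i + 1 < n + 1 then μ (i + 2) else 0) : ℝ) : ℂ)
      else if j = i + 1 then -Complex.I * (μ (i + 2) : ℂ)
      else if i = j + 1 then Complex.I * (μ (i + 1) : ℂ)
      else 0) * A j =
    ∑ i ∈ Finset.range n, ((μ (i + 2) * ‖Complex.I * A i + A (i + 1)‖ ^ 2 : ℝ) : ℂ) := by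
  have split : ∀ i j : ℕ, star (A i) *
      (if i = j then
        (((if 1 ≤ i then μ (i + 1) else 0) + (if i + 1 < n + 1 then μ (i + 2) else 0) : ℝ) : ℂ)
      else if j = i + 1 then -Complex.I * (μ (i + 2) : ℂ)
      else if i = j + 1 then Complex.I * (μ (i + 1) : ℂ)
      else 0) * A j =
      (if i = j then star (A i) * ((if 1 ≤ i then μ (i + 1) else 0 : ℝ) : ℂ) * A i else 0)
      + (if i = j then star (A i) * ((if i + 1 < n + 1 then μ (i + 2) else 0 : ℝ) : ℂ) * A i
          else 0)
      + (if i + 1 = j then star (A i) * (-Complex.I * (μ (i + 2) : ℂ)) * A (i + 1) else 0)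
      + (if j + 1 = i then star (A (j + 1)) * (Complex.I * (μ (j + 2) : ℂ)) * A j else 0) := by
    intro i j
    rcases eq_or_ne i j with rfl | h
    · simp; ring
    · by_cases h1 : j = i + 1
      · subst h1; simp [show i + 1 + 1 ≠ i by omega]
      · by_cases h2 : i = j + 1
        · subst h2; simp [show j ≠ j + 1 + 1 by omega, show j + 1 + 1 ≠ j by omega]
        · simp [h, h1, h2, Ne.symm h1, Ne.symm h2]
  simp_rw [split, edge_expand, Finset.sum_add_distrib]
  congr 1
  · congr 1
    · congr 1
      · rw [Finset.sum_range_succ']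
        simp
        refine Finset.sum_congr rfl fun i hi => ?_
        simp [Finset.mem_range.1 hi]
      · rw [Finset.sum_range_succ]
        simp
        refine Finset.sum_congr rfl fun i hi => ?_
        have := Finset.mem_range.1 hi
        simp [this, this.le]
    · rw [Finset.sum_range_succ]
      simp [-Finset.sum_neg_distrib]
      refine Finset.sum_congr rfl fun i hi => ?_
      simp [Finset.mem_range.1 hi]
  · rw [Finset.sum_comm, Finset.sum_range_succ]
    simp
    refine Finset.sum_congr rfl fun i hi => ?_
    simp [Finset.mem_range.1 hi]

/-- **Sum-of-squares decomposition from the proof of Lemma 1 of the paper.**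
For real numbers `μ_2,…,μ_N` (given as `μ : ℕ → ℝ`, only the values `μ 2,…,μ N` matter),
let `R̃_{o2}` be the complex Hermitian `N×N` tridiagonal matrix with diagonal
`μ_2, μ_2+μ_3, …, μ_{N−1}+μ_N, μ_N`, superdiagonal entries `−i μ_k` and subdiagonal
entries `i μ_k` (k = 2,…,N).  Then `a† R̃_{o2} a = Σ_{k=2}^N μ_k |i a_{k−1} + a_k|²`,
and if all `μ_k ≥ 0` then `R̃_{o2}` is positive semidefinite.
(Matrix indices are 0-based; row `i` corresponds to the paper's row `i+1`.) -/
theorem stmt4 (N : ℕ) (hN : 2 ≤ N) (μ : ℕ → ℝ)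
    (Rt2 : Matrix (Fin N) (Fin N) ℂ)
    (hRt2 : ∀ i j : Fin N, Rt2 i j =
      if i = j then
        (((if 1 ≤ (i : ℕ) then μ ((i : ℕ) + 1) else 0)
          + (if (i : ℕ) + 1 < N then μ ((i : ℕ) + 2) else 0) : ℝ) : ℂ)
      else if (j : ℕ) = (i : ℕ) + 1 then -Complex.I * (μ ((i : ℕ) + 2) : ℂ)
      else if (i : ℕ) = (j : ℕ) + 1 then Complex.I * (μ ((i : ℕ) + 1) : ℂ)
      else 0) :
    (∀ a : Fin N → ℂ,
      star a ⬝ᵥ (Rt2 *ᵥ a) =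
        ((∑ i : Fin N, if h : (i : ℕ) + 1 < N then
            μ ((i : ℕ) + 2) * ‖Complex.I * a i + a ⟨(i : ℕ) + 1, h⟩‖ ^ 2
          else 0 : ℝ) : ℂ)) ∧
    ((∀ k : ℕ, 2 ≤ k → k ≤ N → 0 ≤ μ k) → Rt2.PosSemidef) := by
  have key : ∀ a : Fin N → ℂ,
      star a ⬝ᵥ (Rt2 *ᵥ a) =
        ((∑ i : Fin N, if h : (i : ℕ) + 1 < N then
            μ ((i : ℕ) + 2) * ‖Complex.I * a i + a ⟨(i : ℕ) + 1, h⟩‖ ^ 2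
          else 0 : ℝ) : ℂ) := by
    intro a
    obtain ⟨n, rfl⟩ : ∃ n, N = n + 1 := ⟨N - 1, by omega⟩
    -- Extend `a` by zero to a sequence, so that index shifts take place in `ℕ`.
    obtain ⟨A, hA⟩ : ∃ A : ℕ → ℂ, ∀ i : Fin (n + 1), a i = A i :=
      ⟨fun k => if h : k < n + 1 then a ⟨k, h⟩ else 0, fun i => by simp only [i.isLt, dite_true]⟩
    have h := tridiag_sum n μ A
    simp only [Finset.sum_range] at h
    simp only [dotProduct, mulVec, Finset.mul_sum, Pi.star_apply, hRt2, hA, Fin.ext_iff,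
      ← mul_assoc]
    rw [h, Fin.sum_univ_castSucc]
    simp
  refine ⟨key, fun hμ => ?_⟩
  refine PosSemidef.of_dotProduct_mulVec_nonneg ?_ fun a => ?_
  · ext i j
    rw [conjTranspose_apply, hRt2, hRt2]
    rcases eq_or_ne i j with rfl | h
    · simp only [if_true, Complex.star_def, Complex.conj_ofReal]
    · by_cases h1 : (j : ℕ) = i + 1
      · simp [h, h.symm, h1, show (i : ℕ) ≠ i + 1 + 1 by omega]
      · by_cases h2 : (i : ℕ) = j + 1
        · simp [h, h.symm, h2, show (j : ℕ) ≠ j + 1 + 1 by omega]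
        · simp [h, h.symm, h1, h2]
  · rw [key a, Complex.zero_le_real]
    refine Finset.sum_nonneg fun i _ => ?_
    split_ifs with h
    · exact mul_nonneg (hμ _ (by omega) (by omega)) (sq_nonneg _)
    · exact le_rfl
end

section
/- Let N ≥ 2 be an integer and let μ_2, …, μ_N be strictly positive real numbers. Let R̃_{o2} be the complex Hermitian N×N tridiagonal matrix with diagonal entries μ_2, μ_2 + μ_3, μ_3 + μ_4, …, μ_{N−1} + μ_N, μ_N, superdiagonal entries (R̃_{o2})_{k−1,k} = −i μ_k and subdiagonal entries (R̃_{o2})_{k,k−1} = i μ_k for k = 2, …, N. Then the null space of R̃_{o2} is exactly the one-dimensional complex span of the vector v ∈ ℂ^N with components v_k = (−i)^{k−1}, k = 1, …, N. -/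
open Matrix

/-!
The matrix is a weighted path Laplacian twisted by the phase `-I`. With the discrete differences
`d k = a k + I * a (k - 1)`, row `i` of `Rt2 *ᵥ a` is
`μ (i + 1) * d i - I * μ (i + 2) * d (i + 1)`, where the first term is absent in the first row and
the second one in the last row (`row_formula`). If `a` lies in the kernel, the first row forces
`d 1 = 0`, and each further row propagates `d i = 0` to `d (i + 1) = 0` because the weights are
nonzero. Hence `a k = -I * a (k - 1)` for all `k`, so `a k = (-I) ^ k * a 0`; conversely all the
differences of `(-I) ^ k` vanish.
-/

/-- The rows of `Rt2 *ᵥ a` in terms of differences of neighbouring entries. The vector is given as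
the restriction of a sequence on `ℕ`, so that neighbours need no bound proofs. -/
theorem row_formula (N : ℕ) (μ : ℕ → ℝ)
    (Rt2 : Matrix (Fin N) (Fin N) ℂ)
    (hRt2 : ∀ i j : Fin N, Rt2 i j =
      if i = j then
        (((if 1 ≤ (i : ℕ) then μ ((i : ℕ) + 1) else 0)
          + (if (i : ℕ) + 1 < N then μ ((i : ℕ) + 2) else 0) : ℝ) : ℂ)
      else if (j : ℕ) = (i : ℕ) + 1 then -Complex.I * (μ ((i : ℕ) + 2) : ℂ)
      else if (i : ℕ) = (j : ℕ) + 1 then Complex.I * (μ ((i : ℕ) + 1) : ℂ)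
      else 0)
    (A : ℕ → ℂ) (i : Fin N) :
    (Rt2 *ᵥ fun k : Fin N => A k) i =
      (if 1 ≤ (i : ℕ) then (μ ((i : ℕ) + 1) : ℂ) * (A i + Complex.I * A ((i : ℕ) - 1)) else 0)
      + (if (i : ℕ) + 1 < N then
          -Complex.I * (μ ((i : ℕ) + 2) : ℂ) * (A ((i : ℕ) + 1) + Complex.I * A i) else 0) := by
  obtain ⟨i, hi⟩ := i
  simp only [Matrix.mulVec, dotProduct]
  -- Each summand splits into a diagonal, a superdiagonal and a subdiagonal contribution. In the
  -- last one the truncated `i - 1` agrees with `i` when `i = 0`, hence the guard `1 ≤ i`.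
  let f : ℕ → ℂ := fun j : ℕ =>
        (if i = j then (((if 1 ≤ i then μ (i + 1) else 0)
          + (if i + 1 < N then μ (i + 2) else 0) : ℝ) : ℂ) * A i else 0)
        + (if i + 1 = j then -Complex.I * (μ (i + 2) : ℂ) * A (i + 1) else 0)
        + (if i - 1 = j then
            (if 1 ≤ i then Complex.I * (μ (i + 1) : ℂ) * A (i - 1) else 0) else 0)
  have key : ∀ j : Fin N, Rt2 ⟨i, hi⟩ j * A j = f j := by
    rintro ⟨j, hj⟩
    rw [hRt2]
    simp only [Fin.mk.injEq, f]
    by_cases h1 : i = j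
    · subst h1
      by_cases h3 : i - 1 = i
      · have h4 : i = 0 := by omega
        simp [h4]
      · simp [h3]
    · by_cases h2 : j = i + 1
      · subst h2
        have h3 : ¬ (i - 1 = i + 1) := by omega
        simp [h3]
      · by_cases h3 : i = j + 1
        · subst h3
          have h4 : ¬ (j + 1 + 1 = j) := by omega
          simp [h2, h4]
        · have h4 : ¬ (i + 1 = j) := by omega
          by_cases h5 : i - 1 = j
          · have h6 : ¬ (1 ≤ i) := by omega
            simp only [h1, h2, h3, h4, h5, h6, if_false, if_true]
            simp
          · simp only [h1, h2, h3, h4, h5, if_false]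
            simp
  rw [Finset.sum_congr rfl (fun j _ => key j), Fin.sum_univ_eq_sum_range f N]
  simp only [f, Finset.sum_add_distrib, Finset.sum_ite_eq, Finset.mem_range, hi, if_true]
  have h0 : i - 1 < N := by omega
  simp only [h0, if_true]
  have hI := Complex.I_mul_I
  split_ifs <;> push_cast <;>
    first | ring1 | linear_combination (μ (i + 2) : ℂ) * A i * hI

/-- **Kernel identification from the proof of Lemma 1 of the paper.**
For strictly positive `μ_2,…,μ_N`, the null space of the complex Hermitian `N×N`
tridiagonal matrix `R̃_{o2}` (diagonal `μ_2, μ_2+μ_3, …, μ_{N−1}+μ_N, μ_N`,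
superdiagonal `−i μ_k`, subdiagonal `i μ_k`) is exactly the complex span of the
vector `v` with components `v_k = (−i)^{k−1}`.
(Matrix indices are 0-based; row `i` corresponds to the paper's row `i+1`.) -/
theorem stmt5 (N : ℕ) (hN : 2 ≤ N) (μ : ℕ → ℝ) (hμ : ∀ k : ℕ, 2 ≤ k → k ≤ N → 0 < μ k)
    (Rt2 : Matrix (Fin N) (Fin N) ℂ)
    (hRt2 : ∀ i j : Fin N, Rt2 i j =
      if i = j then
        (((if 1 ≤ (i : ℕ) then μ ((i : ℕ) + 1) else 0)
          + (if (i : ℕ) + 1 < N then μ ((i : ℕ) + 2) else 0) : ℝ) : ℂ)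
      else if (j : ℕ) = (i : ℕ) + 1 then -Complex.I * (μ ((i : ℕ) + 2) : ℂ)
      else if (i : ℕ) = (j : ℕ) + 1 then Complex.I * (μ ((i : ℕ) + 1) : ℂ)
      else 0) :
    LinearMap.ker Rt2.mulVecLin =
      Submodule.span ℂ {fun k : Fin N => (-Complex.I) ^ (k : ℕ)} := by
  ext a
  rw [LinearMap.mem_ker, Submodule.mem_span_singleton, Matrix.mulVecLin_apply]
  constructor
  · intro ha
    obtain ⟨A, rfl⟩ : ∃ A : ℕ → ℂ, a = fun k : Fin N => A k :=
      ⟨fun n => if h : n < N then a ⟨n, h⟩ else 0, by ext k; simp⟩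
    have row := fun (i : ℕ) (hi : i < N) =>
      (row_formula N μ Rt2 hRt2 A ⟨i, hi⟩).symm.trans (congrFun ha ⟨i, hi⟩)
    simp only [Pi.zero_apply] at row
    have hd : ∀ i : ℕ, i + 1 < N → A (i + 1) + Complex.I * A i = 0 := by
      intro i
      induction i with
      | zero =>
        intro h
        have := row 0 (by omega)
        have hm : (μ 2 : ℂ) ≠ 0 := by exact_mod_cast (hμ 2 (by omega) (by omega)).ne'
        simpa [h, hm] using this
      | succ i ih =>
        intro h
        have := row (i + 1) (by omega)
        have hm : (μ (i + 1 + 2) : ℂ) ≠ 0 := by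
          exact_mod_cast (hμ (i + 1 + 2) (by omega) (by omega)).ne'
        simpa [h, hm, ih (by omega)] using this
    have hA : ∀ i : ℕ, i < N → A i = A 0 * (-Complex.I) ^ i := by
      intro i
      induction i with
      | zero => simp
      | succ i ih =>
        intro h
        rw [pow_succ]
        linear_combination hd i h - Complex.I * ih (by omega)
    exact ⟨A 0, by ext k; simp [hA k k.2]⟩
  · rintro ⟨c, rfl⟩
    rw [Matrix.mulVec_smul]
    suffices h : (Rt2 *ᵥ fun k : Fin N => (-Complex.I) ^ (k : ℕ)) = 0 by rw [h, smul_zero]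
    ext i
    rw [row_formula N μ Rt2 hRt2 (fun k => (-Complex.I) ^ k) i]
    have hd : ∀ k : ℕ, (-Complex.I) ^ (k + 1) + Complex.I * (-Complex.I) ^ k = 0 := by
      intro k; ring
    obtain ⟨i, hi⟩ := i
    cases i with
    | zero => simp
    | succ i => simp only [hd, Nat.add_sub_cancel]; simp
end

section
/- Let N ≥ 1 be an integer, let μ_1, …, μ_N be strictly positive real numbers, and set ω_i = μ_i + μ_{i+1} for i = 1, …, N−1 and ω_N = μ_N. Let α ∈ ℝ² be a nonzero vector and β = −μ_1 α. Let A_o be the real 2N×2N block tridiagonal matrix equal to 2 times the block matrix whose i-th diagonal block is ω_i J, whose (i, i+1) block is −μ_{i+1} I, and whose (i+1, i) block is μ_{i+1} I; let B_o ∈ ℝ^{2N×2} be 2 times the block column vector with first block Jβ and all other blocks 0; and let C_o ∈ ℝ^{N×2N} be the block diagonal matrix whose k-th diagonal block is the row vector (1/‖α‖²) α^T (−J)^{k−1}. Let v ∈ ℝ^{2N} be the block vector whose k-th 2-dimensional block is J^{k−1} α, for k = 1, …, N. Then A_o v + B_o α^T x_p = 0 for every x_p ∈ ℝ² with α^T x_p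 = 1, i.e. A_o v = −B_o · 1; and C_o v = (1, 1, …, 1)^T ∈ ℝ^N. -/
open Matrix

/-!
Write `w n = J ^ n α`, so that `w (n + 1) = J (w n)` and, since `J² = -I`, `w (n + 2) = -w n`.
Up to the overall factor `2`, block row `i` (0-based) of `A_o v` is
`ω_i w (i + 1) - μ_{i+1} w (i + 1) + μ_i w (i - 1)`, where the second term is absent in the last
row and the third in the first row. The frequency matching condition cancels `μ_{i+1}` and leaves
`μ_i (w (i + 1) + w (i - 1)) = 0` for `i > 0`, and `μ_0 J α = -J β` for `i = 0`.
The identity for `C_o` holds because `(-J) J = I`, whence `(-J) ^ k J ^ k = I`.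
-/

/-- A sum over `Fin N` supported where the index has value `m`, allowing `m` out of range. -/
lemma sum_ite_val_eq {N : ℕ} (m : ℕ) (f : Fin N → ℝ) :
    (∑ j : Fin N, if (j : ℕ) = m then f j else 0) = if h : m < N then f ⟨m, h⟩ else 0 := by
  split_ifs with h
  · rw [Finset.sum_eq_single ⟨m, h⟩]
    · simp
    · intro j _ hj
      exact if_neg fun hjm => hj (Fin.ext hjm)
    · simp
  · refine Finset.sum_eq_zero fun j _ => if_neg fun hjm => h ?_
    exact hjm ▸ j.isLt

/-- **Steady state of the distributed observer (proof of Theorem 1 of the paper).**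
With `μ_1,…,μ_N > 0`, `ω_i = μ_i + μ_{i+1}` for `i < N`, `ω_N = μ_N`, `α ≠ 0`,
`β = −μ_1 α`, let `A_o` be `2·`(block tridiagonal: diagonal blocks `ω_i J`,
super-diagonal blocks `−μ_{i+1} I`, sub-diagonal blocks `μ_{i+1} I`),
`B_o = 2·(Jβ; 0; …; 0)`, and let `C_o` be block diagonal with `k`-th block the row
vector `(1/‖α‖²) αᵀ (−J)^{k−1}`.  Then for the block vector `v` with `k`-th block
`J^{k−1} α` one has `A_o v + (αᵀ x_p) B_o = 0` whenever `αᵀ x_p = 1`, i.e.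
`A_o v = −B_o`, and `C_o v = (1,…,1)ᵀ`.
(Indices here are 0-based: `μ ⟨i⟩` is `μ_{i+1}` of the paper, and `‖α‖² = α ⬝ᵥ α`.) -/
theorem stmt10 (N : ℕ) (hN : 1 ≤ N) (μ : Fin N → ℝ) (hμ : ∀ i, 0 < μ i)
    (ω : Fin N → ℝ)
    (hω : ∀ i : Fin N, ω i = μ i + (if h : (i : ℕ) + 1 < N then μ ⟨(i : ℕ) + 1, h⟩ else 0))
    (α : Fin 2 → ℝ) (hα : α ≠ 0) (β : Fin 2 → ℝ) (hβ : β = -(μ ⟨0, hN⟩ • α))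
    (J : Matrix (Fin 2) (Fin 2) ℝ) (hJ : J = !![0, 1; -1, 0])
    (Ao : Matrix (Fin N × Fin 2) (Fin N × Fin 2) ℝ)
    (hAo : ∀ (i j : Fin N) (a b : Fin 2), Ao (i, a) (j, b) =
      2 * (if i = j then ω i * J a b
        else if (j : ℕ) = (i : ℕ) + 1 then -(μ j) * (1 : Matrix (Fin 2) (Fin 2) ℝ) a b
        else if (i : ℕ) = (j : ℕ) + 1 then μ i * (1 : Matrix (Fin 2) (Fin 2) ℝ) a b
        else 0))
    (Bo : Fin N × Fin 2 → ℝ)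
    (hBo : ∀ (i : Fin N) (a : Fin 2), Bo (i, a) =
      2 * (if (i : ℕ) = 0 then (J *ᵥ β) a else 0))
    (Co : Matrix (Fin N) (Fin N × Fin 2) ℝ)
    (hCo : ∀ (k j : Fin N) (b : Fin 2), Co k (j, b) =
      if k = j then (1 / (α ⬝ᵥ α)) * (α ᵥ* (-J) ^ (k : ℕ)) b else 0)
    (v : Fin N × Fin 2 → ℝ)
    (hv : ∀ (k : Fin N) (a : Fin 2), v (k, a) = (J ^ (k : ℕ) *ᵥ α) a) :
    (∀ xp : Fin 2 → ℝ, α ⬝ᵥ xp = 1 → Ao *ᵥ v + (α ⬝ᵥ xp) • Bo = 0) ∧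
    Ao *ᵥ v = -Bo ∧
    Co *ᵥ v = fun _ : Fin N => (1 : ℝ) := by
  have hsq : J * J = -1 := by
    subst hJ
    ext a b
    fin_cases a <;> fin_cases b <;> simp [Matrix.mul_apply, Fin.sum_univ_two]
  have hstep : ∀ (n : ℕ) (a : Fin 2),
      J a 0 * (J ^ n *ᵥ α) 0 + J a 1 * (J ^ n *ᵥ α) 1 = (J ^ (n + 1) *ᵥ α) a := by
    intro n a
    rw [pow_succ', ← Matrix.mulVec_mulVec]
    simp [Matrix.mulVec, dotProduct, Fin.sum_univ_two]
  have htwo : ∀ (n : ℕ) (a : Fin 2), (J ^ (n + 2) *ᵥ α) a = -(J ^ n *ᵥ α) a := by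
    intro n a
    rw [pow_add, pow_two, hsq, mul_neg, mul_one, Matrix.neg_mulVec, Pi.neg_apply]
  have hone : ∀ (a : Fin 2) (x : Fin 2 → ℝ), (1 : Matrix (Fin 2) (Fin 2) ℝ) a 0 * x 0
      + (1 : Matrix (Fin 2) (Fin 2) ℝ) a 1 * x 1 = x a := by
    intro a x
    fin_cases a <;> simp [Matrix.one_apply]
  have hA : Ao *ᵥ v = -Bo := by
    ext ⟨i, a⟩
    have hblock : ∀ j : Fin N, ∑ b : Fin 2, Ao (i, a) (j, b) * v (j, b) =
        (if (j : ℕ) = i then 2 * ω i * (J ^ ((i : ℕ) + 1) *ᵥ α) a else 0)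
        + (if (j : ℕ) = i + 1 then -(2 * μ j * (J ^ (j : ℕ) *ᵥ α) a) else 0)
        + (if (i : ℕ) = j + 1 then 2 * μ i * (J ^ (j : ℕ) *ᵥ α) a else 0) := by
      intro j
      simp only [Fin.sum_univ_two, hAo, hv]
      have h1 := hstep j a
      have h2 := hone a (J ^ (j : ℕ) *ᵥ α)
      by_cases hij : i = j
      · subst hij
        simp only [if_true, Nat.left_eq_add, one_ne_zero, if_false]
        linear_combination 2 * ω i * h1
      · have hij' : (j : ℕ) ≠ i := fun h => hij (Fin.ext h.symm)
        by_cases hj : (j : ℕ) = i + 1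
        · have hj' : (i : ℕ) ≠ j + 1 := by omega
          simp only [if_neg hij, if_neg hij', if_neg hj', if_pos hj]
          linear_combination (-2) * μ j * h2
        · by_cases hi : (i : ℕ) = j + 1
          · simp only [if_neg hij, if_neg hij', if_neg hj, if_pos hi]
            linear_combination 2 * μ i * h2
          · simp [hij, hij', hj, hi]
    have hrow : (Ao *ᵥ v) (i, a) = ∑ j : Fin N, ∑ b : Fin 2, Ao (i, a) (j, b) * v (j, b) := by
      simp only [Matrix.mulVec, dotProduct, Fintype.sum_prod_type]
    rw [hrow, Finset.sum_congr rfl fun j _ => hblock j, Finset.sum_add_distrib,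
      Finset.sum_add_distrib, sum_ite_val_eq, sum_ite_val_eq, dif_pos i.isLt, Pi.neg_apply, hBo,
      hω]
    -- Super-diagonal contribution, cancelled by the `μ_{i+1}` part of `ω_i`.
    have hsuper : (if h : (i : ℕ) + 1 < N then
          -(2 * μ ⟨(i : ℕ) + 1, h⟩ * (J ^ ((i : ℕ) + 1) *ᵥ α) a) else 0)
        = -(2 * (if h : (i : ℕ) + 1 < N then μ ⟨(i : ℕ) + 1, h⟩ else 0)
          * (J ^ ((i : ℕ) + 1) *ᵥ α) a) := by
      split_ifs <;> simp
    rw [hsuper]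
    obtain ⟨n, hn⟩ := i
    cases n with
    | zero =>
      have hJβ : (J *ᵥ β) a = -(μ ⟨0, hN⟩ * (J ^ (0 + 1) *ᵥ α) a) := by
        rw [hβ, Matrix.mulVec_neg, Matrix.mulVec_smul, zero_add, pow_one]
        rfl
      have hsub : (∑ j : Fin N, if (0 : ℕ) = j + 1 then
          2 * μ ⟨0, hn⟩ * (J ^ (j : ℕ) *ᵥ α) a else 0) = 0 :=
        Finset.sum_eq_zero fun j _ => if_neg (by omega)
      simp only [if_true]
      rw [hsub, hJβ]
      ring
    | succ n =>
      have hsub : (∑ j : Fin N, if n + 1 = (j : ℕ) + 1 then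
          2 * μ ⟨n + 1, hn⟩ * (J ^ (j : ℕ) *ᵥ α) a else 0)
          = 2 * μ ⟨n + 1, hn⟩ * (J ^ n *ᵥ α) a := by
        simp only [add_left_inj, eq_comm (a := n)]
        rw [sum_ite_val_eq, dif_pos (by omega)]
      simp only [Nat.add_eq_zero_iff, one_ne_zero, and_false, if_false]
      rw [hsub]
      linear_combination 2 * μ ⟨n + 1, hn⟩ * htwo n a
  refine ⟨fun xp hxp => ?_, hA, ?_⟩
  · rw [hxp, one_smul, hA, neg_add_cancel]
  · ext k
    have hpow : (-J) ^ (k : ℕ) * J ^ (k : ℕ) = 1 := by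
      rw [← ((Commute.refl J).neg_left).mul_pow, neg_mul, hsq, neg_neg, one_pow]
    have hαα : α ⬝ᵥ α ≠ 0 := fun h => hα (dotProduct_self_eq_zero.mp h)
    have hrow : (Co *ᵥ v) k =
        (1 / (α ⬝ᵥ α)) * ((α ᵥ* (-J) ^ (k : ℕ)) ⬝ᵥ (J ^ (k : ℕ) *ᵥ α)) := by
      have hexp : (Co *ᵥ v) k = ∑ j : Fin N, ∑ b : Fin 2, Co k (j, b) * v (j, b) := by
        simp only [Matrix.mulVec, dotProduct, Fintype.sum_prod_type]
      rw [hexp, Finset.sum_eq_single k]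
      · simp only [hCo, hv, if_true, dotProduct, Finset.mul_sum, mul_assoc]
      · intro j _ hj
        simp [hCo, hj.symm]
      · simp
    rw [hrow, ← Matrix.dotProduct_mulVec, Matrix.mulVec_mulVec, hpow, Matrix.one_mulVec,
      one_div_mul_cancel hαα]
end
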